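/- Let ε > 0 and let Q be a privacy protocol satisfying ε-LDP, all of whose entries are positive and whose rank is a, and let μ be a Borel probability measure on the simplex 𝒫 having a continuous density, with p ↦ log det D_p and p ↦ log det G_p − Σ_{y=1}^b log((Qp)_y) μ-integrable. Then δ_μ(Q) ≥ (a−1) · log( √(2πe) / (e^ε − 1) ) − b·ε/2. -/

import Mathlib

/-!
The bound holds pointwise: for every `p` in the simplex, with `r = Qp`,
`log det G_p - ∑ log r_y - log det D_p ≥ -b ε - 2 (a - 1) log (e^ε - 1)`,
and integrating against `μ`, which is carried by the simplex (`ae_mem_simplex`), gives the theorem.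

*Upper bound for `det D_p`* (`Dmat_det_le`). A unimodular change of basis turns `D_p` into
the block sum of `1` and the Gram matrix of the column differences `Q_x - Q_{x₀}` for the weights
`1 / r_y`. Privacy gives `|Q_{y|x} - Q_{y|x₀}| ≤ (e^ε - 1) r_y`, so the diagonal entries of the Gram
matrix are at most `(e^ε - 1)²`, and its determinant is at most `(e^ε - 1)^(2 (a - 1))` by AM-GM on
the eigenvalues (`det_le_pow_of_diag_le`). Full rank makes `det D_p` positive (`Dmat_det_pos`), so
that the logarithm may be taken.

*Lower bound for `det G_p`* (`Gmat_det_ge`). The quadratic form of `E_x` is a variance under the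
column `Q_x`. As `Q_{y|x} ≥ e^{-ε} r_y` and a variance is a minimum of second moments, `E_x`, and so
`G_p`, dominates `e^{-ε} (diag r - r rᵀ)` (last category removed), whose determinant is
`e^{-(b - 1) ε} ∏ r_y`; the determinant is monotone for the Loewner order
(`det_le_det_of_posSemidef_sub`).
-/

open MeasureTheory Matrix Finset Filter Real

noncomputable section

/-- The probability simplex in `ℝ^a`. -/
def simplex (a : ℕ) : Set (Fin a → ℝ) :=
  {p | (∀ x, 0 ≤ p x) ∧ ∑ x, p x = 1}

/-- Likelihood `L_y(p) = ∏ i, (Qp)_{y i}`. -/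
def lik {a b n : ℕ} (Q : Matrix (Fin b) (Fin a) ℝ) (y : Fin n → Fin b)
    (p : Fin a → ℝ) : ℝ :=
  ∏ i, Q.mulVec p (y i)

/-- Mean squared error for distribution estimation. -/
def MSEdistr {a b n : ℕ} (Q : Matrix (Fin b) (Fin a) ℝ) (μ : Measure (Fin a → ℝ))
    (Est : (Fin n → Fin b) → (Fin a → ℝ)) : ℝ :=
  ∑ y : (Fin n → Fin b), ∫ p, (∑ x, (p x - Est y x) ^ 2) * lik Q y p ∂μ

/-- The posterior-mean estimator for distribution estimation. -/
def PiOpt {a b n : ℕ} (Q : Matrix (Fin b) (Fin a) ℝ) (μ : Measure (Fin a → ℝ))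
    (y : Fin n → Fin b) : Fin a → ℝ :=
  fun x => (∫ p, p x * lik Q y p ∂μ) / (∫ p, lik Q y p ∂μ)

/-- Empirical frequency vector of a data vector. -/
def freqVec {a n : ℕ} (xv : Fin n → Fin a) : Fin a → ℝ :=
  fun α => ((Finset.univ.filter fun i => xv i = α).card : ℝ) / n

/-- Joint weight `w(x⃗,y⃗) = ∫ ∏ i, p_{x_i} Q_{y_i|x_i} dμ(p)`. -/
def wgt {a b n : ℕ} (Q : Matrix (Fin b) (Fin a) ℝ) (μ : Measure (Fin a → ℝ))
    (xv : Fin n → Fin a) (y : Fin n → Fin b) : ℝ :=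
  ∫ p, (∏ i, p (xv i) * Q (y i) (xv i)) ∂μ

/-- Mean squared error for frequency estimation. -/
def MSEfreq {a b n : ℕ} (Q : Matrix (Fin b) (Fin a) ℝ) (μ : Measure (Fin a → ℝ))
    (Est : (Fin n → Fin b) → (Fin a → ℝ)) : ℝ :=
  ∑ xv : (Fin n → Fin a), ∑ y : (Fin n → Fin b),
    wgt Q μ xv y * ∑ α, (freqVec xv α - Est y α) ^ 2

/-- The posterior-mean estimator for frequency estimation. -/
def PhiOpt {a b n : ℕ} (Q : Matrix (Fin b) (Fin a) ℝ) (μ : Measure (Fin a → ℝ))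
    (y : Fin n → Fin b) : Fin a → ℝ :=
  fun α => (∑ xv : (Fin n → Fin a), wgt Q μ xv y * freqVec xv α) /
    (∑ xv : (Fin n → Fin a), wgt Q μ xv y)

/-- `P(φ, y⃗) = ∑_{x⃗ : F(x⃗) = φ} w(x⃗, y⃗)`. -/
def Pphi {a b n : ℕ} (Q : Matrix (Fin b) (Fin a) ℝ) (μ : Measure (Fin a → ℝ))
    (φ : Fin a → ℝ) (y : Fin n → Fin b) : ℝ := by
  classical
  exact ∑ xv ∈ Finset.univ.filter (fun xv : Fin n → Fin a => freqVec xv = φ), wgt Q μ xv y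

/-- Conditional Shannon entropy `H_n(F | Y⃗)` (terms with zero probability vanish since
`Real.log 0 = 0`). -/
def HFcond {a b : ℕ} (Q : Matrix (Fin b) (Fin a) ℝ) (μ : Measure (Fin a → ℝ))
    (n : ℕ) : ℝ := by
  classical
  exact -(∑ y : (Fin n → Fin b), ∑ φ ∈ Finset.image (freqVec (a := a) (n := n)) Finset.univ,
      Pphi Q μ φ y * Real.log (Pphi Q μ φ y /
        ∑ φ' ∈ Finset.image (freqVec (a := a) (n := n)) Finset.univ, Pphi Q μ φ' y))

/-- The set `Δ = {q ∈ ℝ^m : q ≥ 0, ∑ q ≤ 1}`. -/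
def stdCorner (m : ℕ) : Set (Fin m → ℝ) :=
  {q | (∀ i, 0 ≤ q i) ∧ ∑ i, q i ≤ 1}

/-- The identification `Δ ⊂ ℝ^{a-1} → 𝒫 ⊂ ℝ^a`,
`q ↦ (q_1, …, q_{a-1}, 1 - ∑ q_i)`. -/
def emb (a : ℕ) (q : Fin (a - 1) → ℝ) : Fin a → ℝ :=
  fun x => if h : (x : ℕ) < a - 1 then q ⟨x.1, h⟩ else 1 - ∑ i, q i

/-- `μ` has density `f` (w.r.t. Lebesgue measure on `Δ`). -/
def IsDensity {a : ℕ} (μ : Measure (Fin a → ℝ)) (f : (Fin (a - 1) → ℝ) → ℝ) : Prop :=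
  Measurable f ∧ (∀ q, 0 ≤ f q) ∧ (∫ q in stdCorner (a - 1), f q) = 1 ∧
  ∀ g : (Fin a → ℝ) → ℝ, Measurable g → (∃ C, ∀ p, |g p| ≤ C) →
    (∫ p, g p ∂μ) = ∫ q in stdCorner (a - 1), g (emb a q) * f q

/-- `μ` has continuous density `f`. -/
def IsContDensity {a : ℕ} (μ : Measure (Fin a → ℝ)) (f : (Fin (a - 1) → ℝ) → ℝ) : Prop :=
  ContinuousOn f (stdCorner (a - 1)) ∧ (∀ q, 0 ≤ f q) ∧
  (∫ q in stdCorner (a - 1), f q) = 1 ∧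
  ∀ g : (Fin a → ℝ) → ℝ, Measurable g → (∃ C, ∀ p, |g p| ≤ C) →
    (∫ p, g p ∂μ) = ∫ q in stdCorner (a - 1), g (emb a q) * f q

/-- Normalisation constant `C_{y⃗} = ∫_Δ f(q) L_{y⃗}(p(q)) dλ(q)`. -/
def Cw {a b n : ℕ} (Q : Matrix (Fin b) (Fin a) ℝ) (f : (Fin (a - 1) → ℝ) → ℝ)
    (y : Fin n → Fin b) : ℝ :=
  ∫ q in stdCorner (a - 1), f q * lik Q y (emb a q)

/-- Posterior density `g_{y⃗}(q) = f(q) L_{y⃗}(p(q)) / C_{y⃗}`. -/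
def gpost {a b n : ℕ} (Q : Matrix (Fin b) (Fin a) ℝ) (f : (Fin (a - 1) → ℝ) → ℝ)
    (y : Fin n → Fin b) (q : Fin (a - 1) → ℝ) : ℝ :=
  f q * lik Q y (emb a q) / Cw Q f y

/-- Conditional differential entropy `h_n(P | Y⃗)`. -/
def hCond {a b : ℕ} (Q : Matrix (Fin b) (Fin a) ℝ) (f : (Fin (a - 1) → ℝ) → ℝ)
    (n : ℕ) : ℝ :=
  ∑ y : (Fin n → Fin b),
    Cw Q f y * (-(∫ q in stdCorner (a - 1), gpost Q f y q * Real.log (gpost Q f y q)))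

/-- The matrix `D_p = Qᵀ · diag(Qp)⁻¹ · Q`. -/
def Dmat {a b : ℕ} (Q : Matrix (Fin b) (Fin a) ℝ) (p : Fin a → ℝ) :
    Matrix (Fin a) (Fin a) ℝ :=
  Qᵀ * Matrix.diagonal (fun y => (Q.mulVec p y)⁻¹) * Q

/-- The constant `γ_μ(Q)`. -/
def gammaMu {a b : ℕ} (Q : Matrix (Fin b) (Fin a) ℝ) (μ : Measure (Fin a → ℝ)) : ℝ :=
  (((a : ℝ) - 1) / 2) * Real.log (2 * π * Real.exp 1) -
    (1 / 2) * ∫ p, Real.log (Dmat Q p).det ∂μ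

/-- The truncated column `w_x = (Q_{1|x}, …, Q_{b-1|x})`. -/
def wcol {a b : ℕ} (Q : Matrix (Fin b) (Fin a) ℝ) (x : Fin a) : Fin (b - 1) → ℝ :=
  fun y => Q ⟨y.1, lt_of_lt_of_le y.2 (Nat.sub_le b 1)⟩ x

/-- The matrix `E_x = diag(w_x) - w_x w_xᵀ`. -/
def Emat {a b : ℕ} (Q : Matrix (Fin b) (Fin a) ℝ) (x : Fin a) :
    Matrix (Fin (b - 1)) (Fin (b - 1)) ℝ :=
  Matrix.diagonal (wcol Q x) - Matrix.vecMulVec (wcol Q x) (wcol Q x)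

/-- The matrix `G_p = ∑ x, p_x E_x`. -/
def Gmat {a b : ℕ} (Q : Matrix (Fin b) (Fin a) ℝ) (p : Fin a → ℝ) :
    Matrix (Fin (b - 1)) (Fin (b - 1)) ℝ :=
  ∑ x, p x • Emat Q x

/-- The constant `δ_μ(Q)`. -/
def deltaMu {a b : ℕ} (Q : Matrix (Fin b) (Fin a) ℝ) (μ : Measure (Fin a → ℝ)) : ℝ :=
  gammaMu Q μ +
    (1 / 2) * ∫ p, (Real.log (Gmat Q p).det - ∑ y, Real.log (Q.mulVec p y)) ∂μ

/-- `Q` satisfies `ε`-local differential privacy. -/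
def SatisfiesLDP {a b : ℕ} (Q : Matrix (Fin b) (Fin a) ℝ) (ε : ℝ) : Prop :=
  ∀ x x' : Fin a, ∀ y : Fin b, Q y x' ≤ Real.exp ε * Q y x

/-! ### Two determinant inequalities -/

/-- A crude form of Hadamard's inequality, with the largest diagonal entry in place of the product
of all of them. It follows from `λ / c ≤ exp (λ / c - 1)` applied to each eigenvalue, since the
eigenvalues sum to the trace. -/
lemma det_le_pow_of_diag_le {ι : Type*} [Fintype ι] [DecidableEq ι] {M : Matrix ι ι ℝ}
    (hM : M.PosSemidef) {c : ℝ} (hc : 0 < c) (hd : ∀ i, M i i ≤ c) :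
    M.det ≤ c ^ Fintype.card ι := by
  have hdet : M.det = ∏ i, hM.1.eigenvalues i := by
    simpa using hM.1.det_eq_prod_eigenvalues
  have htr : M.trace = ∑ i, hM.1.eigenvalues i := by
    simpa using hM.1.trace_eq_sum_eigenvalues
  have htr' : M.trace ≤ Fintype.card ι * c := by
    calc M.trace = ∑ i, M i i := rfl
      _ ≤ ∑ _i : ι, c := Finset.sum_le_sum fun i _ => hd i
      _ = _ := by simp
  have h1 : ∏ i, (hM.1.eigenvalues i / c) ≤ 1 := by
    calc ∏ i, (hM.1.eigenvalues i / c) ≤ ∏ i, Real.exp (hM.1.eigenvalues i / c - 1) := by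
          refine Finset.prod_le_prod (fun i _ => div_nonneg (hM.eigenvalues_nonneg i) hc.le)
            fun i _ => ?_
          have := Real.add_one_le_exp (hM.1.eigenvalues i / c - 1)
          linarith
      _ = Real.exp (M.trace / c - Fintype.card ι) := by
          rw [← Real.exp_sum, Finset.sum_sub_distrib, htr, Finset.sum_div]
          simp
      _ ≤ 1 := by
          rw [Real.exp_le_one_iff, sub_nonpos, div_le_iff₀ hc]
          exact htr'
  rw [Finset.prod_div_distrib, ← hdet, Finset.prod_const, Finset.card_univ,
    div_le_one (by positivity)] at h1
  exact h1

open scoped MatrixOrder in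
/-- The determinant is monotone for the Loewner order: if `B = SᴴS`, then `S⁻ᴴ A S⁻¹ ≤ 1` has
diagonal entries at most `1`, so its determinant `det A / det B` is at most `1`. -/
lemma det_le_det_of_posSemidef_sub {ι : Type*} [Fintype ι] [DecidableEq ι] {A B : Matrix ι ι ℝ}
    (hA : A.PosSemidef) (hB : B.PosDef) (hAB : (B - A).PosSemidef) : A.det ≤ B.det := by
  obtain ⟨S, hS⟩ := CStarAlgebra.nonneg_iff_eq_star_mul_self.mp hB.posSemidef.nonneg
  rw [star_eq_conjTranspose] at hS
  have hBdet : B.det = S.det * S.det := by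
    rw [hS, det_mul, det_conjTranspose]; simp
  have hSu : IsUnit S.det := by
    have := hB.det_pos
    rw [hBdet] at this
    exact isUnit_iff_ne_zero.mpr fun h => by simp [h] at this
  have hone : (S⁻¹)ᴴ * B * S⁻¹ = 1 := by
    rw [hS, ← Matrix.mul_assoc, ← conjTranspose_mul, Matrix.mul_nonsing_inv _ hSu,
      conjTranspose_one, Matrix.one_mul, Matrix.mul_nonsing_inv _ hSu]
  have hM := hA.conjTranspose_mul_mul_same S⁻¹
  have hM' := hAB.conjTranspose_mul_mul_same S⁻¹
  rw [Matrix.mul_sub, Matrix.sub_mul, hone] at hM'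
  have h := det_le_pow_of_diag_le hM one_pos fun i => by
    have := hM'.diag_nonneg (i := i)
    simpa using this
  have h2 : (S⁻¹)ᴴ.det * S.det = 1 := by
    rw [det_conjTranspose]
    simpa using S.det_nonsing_inv_mul_det hSu
  have h3 : S⁻¹.det * S.det = 1 := S.det_nonsing_inv_mul_det hSu
  rw [one_pow, det_mul, det_mul] at h
  calc A.det = ((S⁻¹)ᴴ.det * A.det * S⁻¹.det) * B.det := by
        rw [hBdet]
        linear_combination (-A.det * (S⁻¹.det * S.det)) * h2 - A.det * h3
    _ ≤ 1 * B.det := mul_le_mul_of_nonneg_right h hB.det_pos.le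
    _ = B.det := one_mul _

/-! ### Upper bound for the determinant of `D_p` -/

/-- Let `r = Qp` and let `U` be the unimodular matrix with columns `e_i - e_*` (`e_*` being the
vertex indexed by `Sum.inr ()`) and `p`. Then `Uᵀ D_p U` is block diagonal with blocks the Gram
matrix of the column differences `Q_i - Q_*` (weighted by `r⁻¹`) and `1`. -/
lemma det_gram_eq {β ι : Type*} [Fintype β] [DecidableEq β] [Fintype ι] [DecidableEq ι]
    (Q : Matrix β (ι ⊕ Unit) ℝ) (p : ι ⊕ Unit → ℝ) (hp : ∑ x, p x = 1)
    (hQ : ∀ x, ∑ y, Q y x = 1) (hr : ∀ y, 0 < Q.mulVec p y) :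
    (Qᵀ * Matrix.diagonal (fun y => (Q.mulVec p y)⁻¹) * Q).det =
      ((Matrix.of fun y i => Q y (Sum.inl i) - Q y (Sum.inr ()))ᵀ *
        Matrix.diagonal (fun y => (Q.mulVec p y)⁻¹) *
        (Matrix.of fun y i => Q y (Sum.inl i) - Q y (Sum.inr ()))).det := by
  set R := Matrix.diagonal (fun y => (Q.mulVec p y)⁻¹) with hR
  set K : Matrix β ι ℝ := Matrix.of fun y i => Q y (Sum.inl i) - Q y (Sum.inr ()) with hK
  let U : Matrix (ι ⊕ Unit) (ι ⊕ Unit) ℝ :=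
    Matrix.fromBlocks 1 (Matrix.of fun i _ => p (Sum.inl i)) (Matrix.of fun _ _ => -1)
      (Matrix.of fun _ _ => p (Sum.inr ()))
  have hU : U.det = 1 := by
    rw [Matrix.det_fromBlocks_one₁₁]
    simpa [Matrix.mul_apply, Fintype.sum_sum_type, add_comm] using hp
  have hQU : Q * U = Matrix.fromCols K (Matrix.of fun y _ => Q.mulVec p y) := by
    ext y (j | j)
    · simp [U, K, Matrix.mul_apply, Fintype.sum_sum_type, Matrix.one_apply, sub_eq_add_neg]
    · simp [U, Matrix.mul_apply, Fintype.sum_sum_type, Matrix.mulVec, dotProduct]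
  have hsumr : ∑ y, Q.mulVec p y = 1 := by
    simp only [Matrix.mulVec, dotProduct]
    rw [Finset.sum_comm]
    simp [← Finset.sum_mul, hQ, hp]
  have hKs : ∀ i, ∑ y, K y i = 0 := by
    intro i
    simp [K, hQ]
  have key : Uᵀ * (Qᵀ * R * Q) * U = Matrix.fromBlocks (Kᵀ * R * K) 0 0 1 := by
    have : Uᵀ * (Qᵀ * R * Q) * U = (Q * U)ᵀ * R * (Q * U) := by
      simp only [Matrix.transpose_mul, Matrix.mul_assoc]
    rw [this, hQU]
    ext (i | i) (j | j)
    · simp [Matrix.mul_apply, hR, Matrix.diagonal_apply]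
    · simp [Matrix.mul_apply, hR, Matrix.diagonal_apply, (hr _).ne', hKs]
    · simp [Matrix.mul_apply, hR, Matrix.diagonal_apply, (hr _).ne', hKs]
    · simp [Matrix.mul_apply, hR, Matrix.diagonal_apply, (hr _).ne', hsumr]
  have := congrArg Matrix.det key
  rw [det_mul, det_mul, det_transpose, hU, one_mul, mul_one, det_fromBlocks_zero₂₁, det_one,
    mul_one] at this
  exact this

/-- Privacy bounds `|Q_{y|x} - Q_{y|x'}|` by `(e^ε - 1) (Qp)_y`, which bounds the diagonal of the
Gram matrix of `det_gram_eq`. -/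
lemma det_gram_le {β ι : Type*} [Fintype β] [DecidableEq β] [Fintype ι] [DecidableEq ι]
    (Q : Matrix β (ι ⊕ Unit) ℝ) (p : ι ⊕ Unit → ℝ) (hp0 : ∀ x, 0 ≤ p x) (hp : ∑ x, p x = 1)
    (hQ : ∀ x, ∑ y, Q y x = 1) (hr : ∀ y, 0 < Q.mulVec p y) {ε : ℝ} (hε : 0 < ε)
    (hLDP : ∀ x x' y, Q y x' ≤ Real.exp ε * Q y x) :
    (Qᵀ * Matrix.diagonal (fun y => (Q.mulVec p y)⁻¹) * Q).det ≤
      ((Real.exp ε - 1) ^ 2) ^ Fintype.card ι := by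
  have he : 0 < Real.exp ε - 1 := by
    have := Real.one_lt_exp_iff.mpr hε
    linarith
  rw [det_gram_eq Q p hp hQ hr]
  have hsumr : ∑ y, Q.mulVec p y = 1 := by
    simp only [Matrix.mulVec, dotProduct]
    rw [Finset.sum_comm]
    simp [← Finset.sum_mul, hQ, hp]
  have havg : ∀ (u : ι ⊕ Unit → ℝ) (t : ℝ), (∀ x, t ≤ u x) → t ≤ ∑ x, u x * p x := by
    intro u t h
    calc t = ∑ x, t * p x := by rw [← Finset.mul_sum, hp, mul_one]
      _ ≤ _ := Finset.sum_le_sum fun x _ => mul_le_mul_of_nonneg_right (h x) (hp0 x)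
  -- Compare both entries with the smallest entry `Q y m` of the row.
  have hdiff : ∀ y x x', Q y x - Q y x' ≤ (Real.exp ε - 1) * Q.mulVec p y := by
    intro y x x'
    obtain ⟨m, -, hm⟩ := Finset.exists_min_image Finset.univ (fun x => Q y x) ⟨x, Finset.mem_univ x⟩
    have h1 : Q y m ≤ Q.mulVec p y := havg (fun x => Q y x) _ fun x => hm x (Finset.mem_univ x)
    have h2 : Q y m ≤ Q y x' := hm x' (Finset.mem_univ x')
    have h3 := hLDP m x y
    have h4 := mul_le_mul_of_nonneg_left h1 he.le
    linarith
  refine det_le_pow_of_diag_le ?_ (by positivity) fun i => ?_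
  · have : (Matrix.diagonal (fun y => (Q.mulVec p y)⁻¹)).PosSemidef :=
      Matrix.posSemidef_diagonal_iff.mpr fun y => (inv_pos.mpr (hr y)).le
    simpa only [conjTranspose_eq_transpose_of_trivial] using
      this.conjTranspose_mul_mul_same
        (Matrix.of fun y i => Q y (Sum.inl i) - Q y (Sum.inr ()))
  · rw [Matrix.mul_apply]
    calc _ = ∑ y, (Q y (Sum.inl i) - Q y (Sum.inr ())) ^ 2 * (Q.mulVec p y)⁻¹ := by
          refine Finset.sum_congr rfl fun y _ => ?_
          simp only [Matrix.mul_diagonal, Matrix.transpose_apply, Matrix.of_apply]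
          ring
      _ ≤ ∑ y, (Real.exp ε - 1) ^ 2 * Q.mulVec p y := by
          refine Finset.sum_le_sum fun y _ => ?_
          rw [← div_eq_mul_inv, div_le_iff₀ (hr y)]
          calc _ ≤ ((Real.exp ε - 1) * Q.mulVec p y) ^ 2 := by
                rw [sq_le_sq, abs_of_pos (mul_pos he (hr y)), abs_sub_le_iff]
                exact ⟨hdiff _ _ _, hdiff _ _ _⟩
            _ = _ := by ring
      _ = _ := by rw [← Finset.mul_sum, hsumr, mul_one]

lemma mulVec_pos {a b : ℕ} {Q : Matrix (Fin b) (Fin a) ℝ} (hQpos : ∀ y x, 0 < Q y x)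
    {p : Fin a → ℝ} (hp : p ∈ simplex a) (y : Fin b) : 0 < Q.mulVec p y := by
  have h0 : ∀ x ∈ Finset.univ, 0 ≤ Q y x * p x := fun x _ => mul_nonneg (hQpos y x).le (hp.1 x)
  refine lt_of_le_of_ne (Finset.sum_nonneg h0) fun h => ?_
  have h1 := (Finset.sum_eq_zero_iff_of_nonneg h0).mp h.symm
  have h2 : ∑ x, p x = 0 := Finset.sum_eq_zero fun x hx =>
    (mul_eq_zero.mp (h1 x hx)).resolve_left (hQpos y x).ne'
  rw [hp.2] at h2
  exact one_ne_zero h2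

lemma Dmat_det_le {m b : ℕ} {Q : Matrix (Fin b) (Fin (m + 1)) ℝ} (hQpos : ∀ y x, 0 < Q y x)
    (hQcol : ∀ x, ∑ y, Q y x = 1) {p : Fin (m + 1) → ℝ} (hp : p ∈ simplex (m + 1))
    {ε : ℝ} (hε : 0 < ε) (hLDP : SatisfiesLDP Q ε) :
    (Dmat Q p).det ≤ ((Real.exp ε - 1) ^ 2) ^ m := by
  let e : Fin m ⊕ Unit ≃ Fin (m + 1) := Fintype.equivOfCardEq (by simp)
  have hmv : (Q.submatrix id e).mulVec (p ∘ e) = Q.mulVec p := by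
    ext y
    exact e.sum_comp fun x => Q y x * p x
  have h := det_gram_le (Q.submatrix id e) (p ∘ e) (fun x => hp.1 _)
    ((e.sum_comp p).trans hp.2) (fun x => hQcol _)
    (by rw [hmv]; exact mulVec_pos hQpos hp) hε (fun x x' y => hLDP _ _ _)
  rw [hmv] at h
  have h2 : (Q.submatrix id e)ᵀ * Matrix.diagonal (fun y => (Q.mulVec p y)⁻¹) *
      Q.submatrix id e = (Dmat Q p).submatrix e e := rfl
  rw [h2, det_submatrix_equiv_self] at h
  simpa using h

lemma Dmat_det_pos {a b : ℕ} {Q : Matrix (Fin b) (Fin a) ℝ} (hQpos : ∀ y x, 0 < Q y x)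
    (hrank : Q.rank = a) {p : Fin a → ℝ} (hp : p ∈ simplex a) : 0 < (Dmat Q p).det := by
  have hinj : Function.Injective Q.mulVec := by
    rw [Matrix.mulVec_injective_iff, linearIndependent_iff_card_eq_finrank_span,
      Set.finrank, ← Matrix.rank_eq_finrank_span_cols, hrank, Fintype.card_fin]
  have hd : (Matrix.diagonal (fun y => (Q.mulVec p y)⁻¹)).PosDef :=
    Matrix.posDef_diagonal_iff.mpr fun y => inv_pos.mpr (mulVec_pos hQpos hp y)
  have h := (hd.conjTranspose_mul_mul_same hinj).det_pos
  rw [conjTranspose_eq_transpose_of_trivial] at h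
  exact h

/-! ### Lower bound for the determinant of `G_p` -/

/-- The covariance matrix of a categorical distribution, with the last category removed. -/
def catCov {n : ℕ} (r : Fin (n + 1) → ℝ) : Matrix (Fin n) (Fin n) ℝ :=
  Matrix.diagonal (fun i : Fin n => r i.castSucc) -
    Matrix.vecMulVec (fun i : Fin n => r i.castSucc) (fun i : Fin n => r i.castSucc)

lemma catCov_isHermitian {n : ℕ} (r : Fin (n + 1) → ℝ) : (catCov r).IsHermitian := by
  ext i j
  simp only [catCov, conjTranspose_apply, Matrix.sub_apply, Matrix.diagonal_apply,
    Matrix.vecMulVec_apply, star_trivial]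
  by_cases h : i = j
  · simp [h]
  · simp [h, Ne.symm h, mul_comm]

/-- The quadratic form of `catCov r` at `v` is the variance under `r` of `v` extended by `0`,
written here for an arbitrary centre `c`. -/
lemma catCov_quadForm {n : ℕ} (r : Fin (n + 1) → ℝ) (hr : ∑ y, r y = 1) (v : Fin n → ℝ) (c : ℝ) :
    v ⬝ᵥ (catCov r *ᵥ v) =
      ∑ y, r y * ((Fin.snoc v 0 : Fin (n + 1) → ℝ) y - c) ^ 2 -
        (∑ i : Fin n, r i.castSucc * v i - c) ^ 2 := by
  have h1 : v ⬝ᵥ (catCov r *ᵥ v) =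
      ∑ i : Fin n, r i.castSucc * v i ^ 2 - (∑ i : Fin n, r i.castSucc * v i) ^ 2 := by
    rw [catCov, Matrix.sub_mulVec, dotProduct_sub]
    congr 1
    · simp only [dotProduct, Matrix.mulVec_diagonal]
      exact Finset.sum_congr rfl fun i _ => by ring
    · rw [Matrix.vecMulVec_mulVec]
      simp only [dotProduct, Pi.smul_apply, MulOpposite.smul_eq_mul_unop, MulOpposite.unop_op]
      rw [sq, Finset.sum_mul]
      refine Finset.sum_congr rfl fun i _ => by ring
  rw [Fin.sum_univ_castSucc] at hr
  rw [h1, Fin.sum_univ_castSucc]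
  simp only [Fin.snoc_castSucc, Fin.snoc_last]
  have h2 : ∑ i : Fin n, r i.castSucc * (v i - c) ^ 2 =
      ∑ i : Fin n, r i.castSucc * v i ^ 2 - 2 * c * (∑ i : Fin n, r i.castSucc * v i) +
        c ^ 2 * ∑ i : Fin n, r i.castSucc := by
    rw [Finset.mul_sum, Finset.mul_sum, ← Finset.sum_sub_distrib, ← Finset.sum_add_distrib]
    exact Finset.sum_congr rfl fun i _ => by ring
  rw [h2]
  linear_combination (-c ^ 2) * hr

lemma catCov_posSemidef {n : ℕ} {r : Fin (n + 1) → ℝ} (hr0 : ∀ y, 0 ≤ r y)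
    (hr : ∑ y, r y = 1) : (catCov r).PosSemidef := by
  refine Matrix.PosSemidef.of_dotProduct_mulVec_nonneg (catCov_isHermitian r) fun v => ?_
  rw [star_trivial, catCov_quadForm r hr v (∑ i : Fin n, r i.castSucc * v i), sub_self]
  have := Finset.sum_nonneg fun y (_ : y ∈ Finset.univ) => mul_nonneg (hr0 y)
    (sq_nonneg ((Fin.snoc v 0 : Fin (n + 1) → ℝ) y - ∑ i : Fin n, r i.castSucc * v i))
  simpa using this

/-- Variances of distributions with likelihood ratio at least `k` are comparable with constant `k`,
because a variance is the minimum over centres `c` of the second moment about `c`. -/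
lemma catCov_sub_posSemidef {n : ℕ} {r s : Fin (n + 1) → ℝ} (hr : ∑ y, r y = 1)
    (hs : ∑ y, s y = 1) {k : ℝ} (hk : 0 ≤ k) (hrs : ∀ y, k * r y ≤ s y) :
    (catCov s - k • catCov r).PosSemidef := by
  refine Matrix.PosSemidef.of_dotProduct_mulVec_nonneg
    ((catCov_isHermitian s).sub ((catCov_isHermitian r).smul (IsSelfAdjoint.all k))) fun v => ?_
  set c := ∑ i : Fin n, s i.castSucc * v i
  rw [star_trivial, Matrix.sub_mulVec, Matrix.smul_mulVec, dotProduct_sub, dotProduct_smul,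
    catCov_quadForm s hs v c, catCov_quadForm r hr v c, sub_self, smul_eq_mul, mul_sub,
    Finset.mul_sum]
  have h := Finset.sum_le_sum fun y (_ : y ∈ Finset.univ) => mul_le_mul_of_nonneg_right (hrs y)
    (sq_nonneg ((Fin.snoc v 0 : Fin (n + 1) → ℝ) y - c))
  simp only [mul_assoc] at h
  have := mul_nonneg hk (sq_nonneg (∑ i : Fin n, r i.castSucc * v i - c))
  linarith

/-- By the matrix determinant lemma. -/
lemma catCov_det {n : ℕ} {r : Fin (n + 1) → ℝ} (hr : ∑ y, r y = 1) :
    (catCov r).det = ∏ y, r y := by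
  have h : catCov r = Matrix.diagonal (fun i : Fin n => r i.castSucc) *
      (1 + Matrix.replicateCol Unit (fun _ : Fin n => (-1 : ℝ)) *
        Matrix.replicateRow Unit (fun i : Fin n => r i.castSucc)) := by
    ext i j
    rw [Matrix.mul_add, Matrix.mul_one, Matrix.add_apply, Matrix.diagonal_mul]
    simp [catCov, Matrix.vecMulVec_apply, Matrix.mul_apply, sub_eq_add_neg]
  rw [h, det_mul, det_diagonal, Matrix.det_one_add_replicateCol_mul_replicateRow,
    Fin.prod_univ_castSucc]
  congr 1
  rw [Fin.sum_univ_castSucc] at hr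
  simp only [dotProduct, mul_neg, mul_one, Finset.sum_neg_distrib]
  linarith

/-- Privacy gives `Q_{y|x} ≥ e^{-ε} (Qp)_y`, so every `E_x`, hence their average `G_p`, dominates
`e^{-ε}` times the covariance matrix of `Qp`, whose determinant is `∏ (Qp)_y`. -/
lemma Gmat_det_ge {a n : ℕ} {Q : Matrix (Fin (n + 1)) (Fin a) ℝ} (hQpos : ∀ y x, 0 < Q y x)
    (hQcol : ∀ x, ∑ y, Q y x = 1) {p : Fin a → ℝ} (hp : p ∈ simplex a)
    {ε : ℝ} (hLDP : SatisfiesLDP Q ε) :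
    Real.exp (-ε) ^ n * ∏ y, Q.mulVec p y ≤ (Gmat Q p).det := by
  have hr0 := mulVec_pos hQpos hp
  have hsumr : ∑ y, Q.mulVec p y = 1 := by
    simp only [Matrix.mulVec, dotProduct]
    rw [Finset.sum_comm]
    simp [← Finset.sum_mul, hQcol, hp.2]
  set r := Q.mulVec p with hrdef
  have hk := Real.exp_pos (-ε)
  have hE : ∀ x, (catCov (fun y => Q y x) - Real.exp (-ε) • catCov r).PosSemidef := by
    intro x
    refine catCov_sub_posSemidef hsumr (hQcol x) hk.le fun y => ?_
    have : r y ≤ Real.exp ε * Q y x := by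
      calc r y = ∑ x', Q y x' * p x' := rfl
        _ ≤ ∑ x', Real.exp ε * Q y x * p x' :=
          Finset.sum_le_sum fun x' _ => mul_le_mul_of_nonneg_right (hLDP x x' y) (hp.1 x')
        _ = _ := by rw [← Finset.mul_sum, hp.2, mul_one]
    calc Real.exp (-ε) * r y ≤ Real.exp (-ε) * (Real.exp ε * Q y x) :=
          mul_le_mul_of_nonneg_left this hk.le
      _ = Q y x := by rw [← mul_assoc, ← Real.exp_add]; simp
  set G : Matrix (Fin n) (Fin n) ℝ := ∑ x, p x • catCov (fun y => Q y x) with hGdef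
  have hG : G - Real.exp (-ε) • catCov r =
      ∑ x, p x • (catCov (fun y => Q y x) - Real.exp (-ε) • catCov r) := by
    simp only [smul_sub, Finset.sum_sub_distrib, ← Finset.sum_smul, hp.2, one_smul, hGdef]
  have hdiff : (G - Real.exp (-ε) • catCov r).PosSemidef := by
    rw [hG]
    exact Matrix.posSemidef_sum _ fun x _ => (hE x).smul (hp.1 x)
  have hdetr := catCov_det hsumr
  have hA : (catCov r).PosDef := by
    rw [(catCov_posSemidef (fun y => (hr0 y).le) hsumr).posDef_iff_isUnit,
      Matrix.isUnit_iff_isUnit_det, hdetr, isUnit_iff_ne_zero]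
    exact (Finset.prod_pos fun y _ => hr0 y).ne'
  have hA' := hA.smul hk
  have hB : (G).PosDef := by
    have := hA'.add_posSemidef hdiff
    rwa [add_sub_cancel] at this
  have := det_le_det_of_posSemidef_sub hA'.posSemidef hB hdiff
  rw [det_smul, hdetr, Fintype.card_fin] at this
  exact this

/-! ### Integration -/

/-- Tested against the indicator of the complement of the simplex, the density formula gives `0`. -/
lemma ae_mem_simplex {a : ℕ} (ha : 1 ≤ a) {μ : Measure (Fin a → ℝ)} [IsProbabilityMeasure μ]
    {f : (Fin (a - 1) → ℝ) → ℝ} (hf : IsContDensity μ f) : ∀ᵐ p ∂μ, p ∈ simplex a := by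
  have hms : MeasurableSet (simplex a) := by
    have : simplex a = (⋂ x, {p | 0 ≤ p x}) ∩ {p | ∑ x, p x = 1} := by
      ext p; simp [simplex]
    rw [this]
    refine (MeasurableSet.iInter fun x => ?_).inter ?_
    · exact measurableSet_le measurable_const (measurable_pi_apply x)
    · exact measurableSet_eq_fun (by fun_prop) measurable_const
  have hemb : ∀ q ∈ stdCorner (a - 1), emb a q ∈ simplex a := by
    obtain ⟨m, rfl⟩ := Nat.exists_eq_add_of_le' ha
    intro q hq
    refine ⟨fun x => ?_, ?_⟩
    · unfold emb
      split_ifs with h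
      · exact hq.1 _
      · linarith [hq.2]
    · rw [Fin.sum_univ_castSucc]
      simp [emb]
  have h := hf.2.2.2 ((simplex a)ᶜ.indicator 1) (measurable_one.indicator hms.compl)
    ⟨1, fun p => by by_cases hp : p ∈ (simplex a)ᶜ <;> simp [hp]⟩
  have hcm : MeasurableSet (stdCorner (a - 1)) := by
    have : stdCorner (a - 1) = (⋂ x, {p | 0 ≤ p x}) ∩ {p | ∑ x, p x ≤ 1} := by
      ext p; simp [stdCorner]
    rw [this]
    refine (MeasurableSet.iInter fun x => ?_).inter ?_
    · exact measurableSet_le measurable_const (measurable_pi_apply x)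
    · exact measurableSet_le (by fun_prop) measurable_const
  rw [setIntegral_congr_fun (g := fun _ => (0 : ℝ)) hcm fun q hq => by simp [hemb q hq],
    integral_indicator_one hms.compl] at h
  simp only [integral_zero] at h
  rw [measureReal_eq_zero_iff] at h
  exact h

/-- lower bound on `δ_μ(Q)` via the LDP parameter `ε`. -/
theorem deltaMu_ge_LDP_bound {a b : ℕ} (ha : 2 ≤ a) (hb : 2 ≤ b)
    (Q : Matrix (Fin b) (Fin a) ℝ)
    (hQpos : ∀ y x, 0 < Q y x) (hQcol : ∀ x, ∑ y, Q y x = 1)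
    (μ : Measure (Fin a → ℝ)) [IsProbabilityMeasure μ]
    (hrank : Q.rank = a)
    (f : (Fin (a - 1) → ℝ) → ℝ) (hf : IsContDensity μ f)
    (hint : Integrable (fun p => Real.log (Dmat Q p).det) μ)
    (hint2 : Integrable
      (fun p => Real.log (Gmat Q p).det - ∑ y, Real.log (Q.mulVec p y)) μ)
    (ε : ℝ) (hε : 0 < ε) (hLDP : SatisfiesLDP Q ε) :
    ((a : ℝ) - 1) * Real.log (Real.sqrt (2 * π * Real.exp 1) / (Real.exp ε - 1)) -
        (b : ℝ) * ε / 2 ≤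
      deltaMu Q μ := by
  have he : 0 < Real.exp ε - 1 := by
    have := Real.one_lt_exp_iff.mpr hε
    linarith
  have hae : ∀ᵐ p ∂μ, -((b : ℝ) * ε) - 2 * ((a : ℝ) - 1) * Real.log (Real.exp ε - 1) ≤
      (Real.log (Gmat Q p).det - ∑ y, Real.log (Q.mulVec p y)) - Real.log (Dmat Q p).det := by
    filter_upwards [ae_mem_simplex (by omega) hf] with p hp
    have hD : Real.log (Dmat Q p).det ≤ 2 * ((a : ℝ) - 1) * Real.log (Real.exp ε - 1) := by
      obtain ⟨m, rfl⟩ := Nat.exists_eq_add_of_le' (le_trans one_le_two ha)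
      have := Real.log_le_log (Dmat_det_pos hQpos hrank hp) (Dmat_det_le hQpos hQcol hp hε hLDP)
      rw [Real.log_pow, Real.log_pow] at this
      push_cast at this ⊢
      linarith
    have hG : -((b : ℝ) * ε) + ∑ y, Real.log (Q.mulVec p y) ≤ Real.log (Gmat Q p).det := by
      obtain ⟨n, rfl⟩ := Nat.exists_eq_add_of_le' (le_trans one_le_two hb)
      have hr0 := mulVec_pos hQpos hp
      have hprod : 0 < ∏ y, Q.mulVec p y := Finset.prod_pos fun y _ => hr0 y
      have hexp : 0 < Real.exp (-ε) ^ n := by positivity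
      have := Real.log_le_log (mul_pos hexp hprod) (Gmat_det_ge hQpos hQcol hp hLDP)
      rw [Real.log_mul hexp.ne' hprod.ne', Real.log_pow, Real.log_exp,
        Real.log_prod fun y _ => (hr0 y).ne'] at this
      push_cast
      linarith
    linarith
  have hI := integral_mono_ae (integrable_const _) (hint2.sub hint) hae
  rw [integral_const, probReal_univ, one_smul, integral_sub' hint2 hint] at hI
  have hpi : (0 : ℝ) < 2 * π * Real.exp 1 := by positivity
  rw [Real.log_div (Real.sqrt_pos.mpr hpi).ne' he.ne', Real.log_sqrt hpi.le, deltaMu, gammaMu]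
  linarith

end
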